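/- Let G be a finite simple graph with vertex set V and nonnegative edge weights w, let W, W⋆ ⊆ V, and let R be a connected component of the subgraph of G induced on W Δ W⋆. Then the cut of the modified vertex set W Δ R satisfies the disjoint-union identity C(W Δ R) = (C(W) \ ∂R) ∪ (∂R ∩ C(W⋆)), where the two sets on the right are disjoint; consequently |C(W Δ R)| = |C(W)| − w(∂R ∩ C(W)) + w(∂R ∩ C(W⋆)). (This is the single-region replacement step used in the proof of the local–global compatibility theorem.) -/

import Mathlib

open scoped Classical symmDiff

/-- The cut of a vertex set `W`: the edges of `G` with exactly one endpoint in `W`. -/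
def graphCut {V : Type*} (G : SimpleGraph V) (W : Set V) : Set (Sym2 V) :=
  {e | e ∈ G.edgeSet ∧ ∃ a b, e = s(a, b) ∧ a ∈ W ∧ b ∉ W}

/-- The total weight of a set of edges. -/
noncomputable def edgeWeight {V : Type*} [Fintype V] [DecidableEq V]
    (w : Sym2 V → ℝ) (S : Set (Sym2 V)) : ℝ :=
  ∑ e : Sym2 V, S.indicator w e

/-- `R` is (the vertex set of) a connected component of the subgraph of `G`
induced on `D`. -/
def IsCompOf {V : Type*} (G : SimpleGraph V) (D R : Set V) : Prop :=
  ∃ c : (SimpleGraph.induce D G).ConnectedComponent, R = Subtype.val '' c.supp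

/-!
Taking cuts is additive modulo two: `C(A ∆ B) = C(A) ∆ C(B)`. Hence `C(W ∆ R) = C(W) ∆ ∂R`, and
`∂(W ∆ W⋆) = C(W) ∆ C(W⋆)` says that an edge of `∂(W ∆ W⋆)` lies in exactly one of the two cuts.
Every edge leaving a component `R` of `W ∆ W⋆` also leaves `W ∆ W⋆`, so on `∂R` passing to the
complement of `C(W)` is the same as passing to `C(W⋆)`.
-/

theorem symmDiff_eq_sdiff_sup_inf_of_le_symmDiff {α : Type*} [GeneralizedBooleanAlgebra α]
    {a b c : α} (h : b ≤ a ∆ c) : a ∆ b = a \ b ⊔ b ⊓ c := by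
  have inf_symmDiff_inf : (b ⊓ a) ∆ (b ⊓ c) = b := by
    rw [← inf_symmDiff_distrib_left, inf_eq_left.mpr h]
  have sdiff_eq_inf : b \ a = b ⊓ c := by
    rw [← sdiff_inf_self_left, (symmDiff_eq_iff_sdiff_eq inf_le_left).mp inf_symmDiff_inf]
  rw [symmDiff_def, sdiff_eq_inf]

section Cut

variable {V : Type*} {G : SimpleGraph V}

theorem mk_mem_graphCut {W : Set V} {a b : V} :
    s(a, b) ∈ graphCut G W ↔ G.Adj a b ∧ Xor (a ∈ W) (b ∈ W) := by
  refine and_congr_right fun _ => ⟨?_, ?_⟩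
  · rintro ⟨x, y, he, hx, hy⟩
    obtain ⟨rfl, rfl⟩ | ⟨rfl, rfl⟩ := Sym2.eq_iff.mp he
    exacts [.inl ⟨hx, hy⟩, .inr ⟨hx, hy⟩]
  · rintro (⟨ha, hb⟩ | ⟨hb, ha⟩)
    exacts [⟨a, b, rfl, ha, hb⟩, ⟨b, a, Sym2.eq_swap, hb, ha⟩]

theorem graphCut_symmDiff (A B : Set V) :
    graphCut G (A ∆ B) = graphCut G A ∆ graphCut G B := by
  ext ⟨a, b⟩
  simp only [Set.mem_symmDiff, mk_mem_graphCut, Xor]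
  tauto

theorem IsCompOf.subset {D R : Set V} (h : IsCompOf G D R) : R ⊆ D := by
  obtain ⟨c, rfl⟩ := h
  exact Subtype.coe_image_subset D c.supp

theorem IsCompOf.mem_of_adj {D R : Set V} (h : IsCompOf G D R) {a b : V} (ha : a ∈ R)
    (hb : b ∈ D) (hab : G.Adj a b) : b ∈ R := by
  obtain ⟨c, rfl⟩ := h
  obtain ⟨a, hac, rfl⟩ := ha
  exact ⟨⟨b, hb⟩, c.mem_supp_of_adj_mem_supp hac hab, rfl⟩

theorem IsCompOf.graphCut_subset_graphCut {D R : Set V} (h : IsCompOf G D R) :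
    graphCut G R ⊆ graphCut G D := by
  rintro _ ⟨hab, a, b, rfl, ha, hb⟩
  exact ⟨hab, a, b, rfl, h.subset ha, fun hbD => hb (h.mem_of_adj ha hbD hab)⟩

end Cut

theorem hasSum_indicator_sdiff_union {ι M : Type*} [AddCommGroup M] [TopologicalSpace M]
    [IsTopologicalAddGroup M] {f : ι → M} {s t u : Set ι} {x y z : M}
    (hs : HasSum (s.indicator f) x) (hts : HasSum ((t ∩ s).indicator f) y)
    (htu : HasSum ((t ∩ u).indicator f) z) :
    HasSum ((s \ t ∪ t ∩ u).indicator f) (x - y + z) := by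
  have disj : Disjoint (s \ t) (t ∩ u) := disjoint_sdiff_self_left.mono_right Set.inter_subset_left
  have indicator_sdiff : (s \ t).indicator f = s.indicator f - (t ∩ s).indicator f := by
    rw [← Set.sdiff_inter_self_eq_sdiff, Set.indicator_sdiff Set.inter_subset_right]
  rw [Set.indicator_union_of_disjoint disj, indicator_sdiff]
  exact (hs.sub hts).add htu

theorem single_region_replacement_general {V M : Type*} [AddCommGroup M] [TopologicalSpace M]
    [IsTopologicalAddGroup M] (G : SimpleGraph V) (w : Sym2 V → M) (W Wstar R : Set V)
    (hR : graphCut G R ⊆ graphCut G (W ∆ Wstar)) :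
    graphCut G (W ∆ R) =
        (graphCut G W \ graphCut G R) ∪ (graphCut G R ∩ graphCut G Wstar) ∧
    Disjoint (graphCut G W \ graphCut G R) (graphCut G R ∩ graphCut G Wstar) ∧
    ∀ {x y z : M}, HasSum ((graphCut G W).indicator w) x →
      HasSum ((graphCut G R ∩ graphCut G W).indicator w) y →
      HasSum ((graphCut G R ∩ graphCut G Wstar).indicator w) z →
      HasSum ((graphCut G (W ∆ R)).indicator w) (x - y + z) := by
  have cut_eq : graphCut G (W ∆ R) =
      (graphCut G W \ graphCut G R) ∪ (graphCut G R ∩ graphCut G Wstar) := by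
    rw [graphCut_symmDiff] at hR ⊢
    exact symmDiff_eq_sdiff_sup_inf_of_le_symmDiff hR
  refine ⟨cut_eq, disjoint_sdiff_self_left.mono_right Set.inter_subset_left, ?_⟩
  rw [cut_eq]
  exact hasSum_indicator_sdiff_union

/-- **Single-region replacement.** For a connected component `R` of the induced
subgraph on `W ∆ W⋆`, the cut of `W ∆ R` is the disjoint union
`(C(W) \ ∂R) ∪ (∂R ∩ C(W⋆))`, and the cut weight changes by
`− w(∂R ∩ C(W)) + w(∂R ∩ C(W⋆))`. -/
theorem single_region_replacement {V : Type*} [Fintype V] [DecidableEq V]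
    (G : SimpleGraph V) (w : Sym2 V → ℝ) (hw : ∀ e, 0 ≤ w e)
    (W Wstar R : Set V) (hR : IsCompOf G (W ∆ Wstar) R) :
    graphCut G (W ∆ R) =
        (graphCut G W \ graphCut G R) ∪ (graphCut G R ∩ graphCut G Wstar) ∧
    Disjoint (graphCut G W \ graphCut G R) (graphCut G R ∩ graphCut G Wstar) ∧
    edgeWeight w (graphCut G (W ∆ R)) =
      edgeWeight w (graphCut G W)
        - edgeWeight w (graphCut G R ∩ graphCut G W)
        + edgeWeight w (graphCut G R ∩ graphCut G Wstar) := by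
  obtain ⟨cut_eq, disj, weight⟩ :=
    single_region_replacement_general G w W Wstar R hR.graphCut_subset_graphCut
  exact ⟨cut_eq, disj, (hasSum_fintype _).unique <|
    weight (hasSum_fintype _) (hasSum_fintype _) (hasSum_fintype _)⟩
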